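/- Let U_1,…,U_r ∈ ℂ[t_1,…,t_m,x_1,…,x_r] be homogeneous polynomials (U_i of total degree d_i ≥ 1), set W_i = U_i(0;·) ∈ ℂ[x_1,…,x_r], and assume that the polynomial ring ℂ[x_1,…,x_r] is integral over the ℂ-subalgebra generated by W_1,…,W_r. Then for every Λ ∈ ℂ^m and every λ ∈ ℂ^r there exists b ∈ ℂ^r such that U_i(Λ; b) = W_i(λ) for all i = 1,…,r. -/

import Mathlib

open MvPolynomial

/-- Specialization `t := ζ` of the first block of variables:
`ℂ[t₁,…,t_m,x₁,…,x_r] → ℂ[x₁,…,x_r]`. -/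
noncomputable def specializeT {m r : ℕ} (ζ : Fin m → ℂ) :
    MvPolynomial (Fin m ⊕ Fin r) ℂ →ₐ[ℂ] MvPolynomial (Fin r) ℂ :=
  aeval (Sum.elim (fun i => C (ζ i)) X)

/-!
In the graded ring `A = ℂ[t, x]` consider the family `V = (t, U)` of homogeneous elements of
positive degree, which has as many members as `A` has variables. Since `U ≡ W` modulo `(t)`, the
ring `A / (V)` is a quotient of `ℂ[x]` in which every `W i` vanishes, so integrality of `ℂ[x]` over
`ℂ[W]` makes it integral over `ℂ`, hence finite-dimensional. The graded Nakayama lemma lifts this to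
finiteness of `A` over `ℂ[V]`. Counting transcendence degrees, the `V k` are algebraically
independent, so `V k ↦ c k` defines a homomorphism `ℂ[V] → ℂ` for any `c`; it extends to the
integral extension `A`, that is, `c` is the value of `V` at some point. For `c = (Λ, W(λ))` this
point is `(Λ, b)` with the desired `b`.
-/

theorem isIntegral_of_surjective_of_map_mem_range {R A B C : Type*} [CommRing R] [CommRing A]
    [CommRing B] [CommRing C] [Algebra R C] [Algebra B A] [Algebra.IsIntegral B A] {f : A →+* C}
    (hf : Function.Surjective f) (hB : ∀ b : B, f (algebraMap B A b) ∈ (algebraMap R C).range) :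
    Algebra.IsIntegral R C := by
  refine ⟨hf.forall.2 fun a => ?_⟩
  obtain ⟨p, hp, hpa⟩ := Algebra.IsIntegral.isIntegral (R := B) a
  have hlift : p.map (f.comp (algebraMap B A)) ∈ Polynomial.lifts (algebraMap R C) :=
    (Polynomial.lifts_iff_coeff_lifts _).2 fun n => by
      rw [Polynomial.coeff_map]
      exact hB (p.coeff n)
  obtain ⟨q, hq, -, hqm⟩ := Polynomial.lifts_and_natDegree_eq_and_monic hlift (hp.map _)
  refine ⟨q, hqm, ?_⟩
  rw [← Polynomial.eval_map, hq, Polynomial.eval_map, ← Polynomial.hom_eval₂, hpa, map_zero]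

theorem isIntegral_of_surjective_of_map_eq_zero {R A C : Type*} [CommRing R] [CommRing A]
    [CommRing C] [Algebra R A] [Algebra R C] {s : Set A} [Algebra.IsIntegral (Algebra.adjoin R s) A]
    {f : A →ₐ[R] C} (hf : Function.Surjective f) (hs : ∀ x ∈ s, f x = 0) :
    Algebra.IsIntegral R C := by
  have hle : Algebra.adjoin R s ≤ (⊥ : Subalgebra R C).comap f :=
    Algebra.adjoin_le fun x hx => Algebra.mem_bot.2 ⟨0, by rw [map_zero]; exact (hs x hx).symm⟩
  exact isIntegral_of_surjective_of_map_mem_range (B := Algebra.adjoin R s) (f := f.toRingHom) hf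
    fun b => Algebra.mem_bot.1 (hle b.2)

theorem exists_fin_sub_mem_of_finite_quotient (R : Type*) {A : Type*} [CommRing R] [CommRing A]
    [Algebra R A] (I : Ideal A) [Module.Finite R (A ⧸ I)] :
    ∃ (m : ℕ) (g : Fin m → A), ∀ a, ∃ u ∈ Submodule.span R (Set.range g), a - u ∈ I := by
  obtain ⟨m, t, ht⟩ := Module.Finite.exists_fin (R := R) (M := A ⧸ I)
  choose g hg using fun i => Ideal.Quotient.mkₐ_surjective R I (t i)
  refine ⟨m, g, fun a => ?_⟩
  have hmap : (Submodule.span R (Set.range g)).map (Ideal.Quotient.mkₐ R I).toLinearMap = ⊤ := by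
    rw [Submodule.map_span, ← Set.range_comp, ← ht]
    exact congrArg _ (congrArg _ (funext hg))
  obtain ⟨u, hu, hua⟩ := (hmap ▸ Submodule.mem_top : Ideal.Quotient.mkₐ R I a ∈ _)
  exact ⟨u, hu, Ideal.Quotient.eq.1 hua.symm⟩

section GradedNakayama

variable {R A : Type*} [CommRing R] [CommRing A] [Algebra R A] {𝒜 : ℕ → Submodule R A}
  [GradedAlgebra 𝒜]

theorem proj_mem_of_mem_ideal_span {s : Set A} (hs : ∀ x ∈ s, ∃ d, 0 < d ∧ x ∈ 𝒜 d)
    {M : Submodule (Algebra.adjoin R s) A} {n : ℕ} (hM : ∀ k < n, ∀ a ∈ 𝒜 k, a ∈ M)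
    {a : A} (ha : a ∈ Ideal.span s) : GradedAlgebra.proj 𝒜 n a ∈ M := by
  obtain ⟨c, hcs, rfl⟩ := Submodule.mem_span_set.1 ha
  rw [Finsupp.sum, map_sum]
  refine M.sum_mem fun x hx => ?_
  obtain ⟨d, hd, hxd⟩ := hs x (hcs hx)
  rw [GradedAlgebra.proj_apply, smul_eq_mul, DirectSum.coe_decompose_mul_of_right_mem 𝒜 n hxd]
  split_ifs with hdn
  · rw [mul_comm]
    exact M.smul_mem ⟨x, Algebra.subset_adjoin (hcs hx)⟩
      (hM (n - d) (by omega) _ (SetLike.coe_mem _))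
  · exact M.zero_mem

theorem finite_adjoin_of_finite_quotient_span {s : Set A}
    (hs : ∀ x ∈ s, ∃ d, 0 < d ∧ x ∈ 𝒜 d) [Module.Finite R (A ⧸ Ideal.span s)] :
    Module.Finite (Algebra.adjoin R s) A := by
  classical
  obtain ⟨m, g, hsub⟩ := exists_fin_sub_mem_of_finite_quotient R (Ideal.span s)
  let T : Finset A := Finset.univ.biUnion fun i =>
    (DirectSum.decompose 𝒜 (g i)).support.image fun k => GradedAlgebra.proj 𝒜 k (g i)
  let M := Submodule.span (Algebra.adjoin R s) (T : Set A)
  have hT (n : ℕ) (i : Fin m) : GradedAlgebra.proj 𝒜 n (g i) ∈ M := by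
    by_cases hn : GradedAlgebra.proj 𝒜 n (g i) = 0
    · exact hn ▸ M.zero_mem
    · exact Submodule.subset_span <| Finset.mem_biUnion.2 ⟨i, Finset.mem_univ i,
        Finset.mem_image_of_mem _ ((GradedAlgebra.mem_support_iff 𝒜 (g i) n).2 hn)⟩
  have hspan (n : ℕ) : Submodule.span R (Set.range g) ≤
      (M.restrictScalars R).comap (GradedAlgebra.proj 𝒜 n) :=
    Submodule.span_le.2 <| Set.range_subset_iff.2 (hT n)
  have hhom (n : ℕ) : ∀ a ∈ 𝒜 n, a ∈ M := by
    induction n using Nat.strong_induction_on with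
    | _ n ih =>
      intro a ha
      obtain ⟨u, hu, hau⟩ := hsub a
      have hproj : GradedAlgebra.proj 𝒜 n a =
          GradedAlgebra.proj 𝒜 n u + GradedAlgebra.proj 𝒜 n (a - u) := by
        rw [← map_add, add_sub_cancel]
      rw [GradedAlgebra.proj_apply, DirectSum.decompose_of_mem_same 𝒜 ha] at hproj
      exact hproj ▸ M.add_mem (hspan n hu) (proj_mem_of_mem_ideal_span hs ih hau)
  refine ⟨T, eq_top_iff.2 fun a _ => ?_⟩
  rw [← DirectSum.sum_support_decompose 𝒜 a]
  exact M.sum_mem fun n _ => hhom n _ (SetLike.coe_mem _)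

end GradedNakayama

theorem exists_algHom_algebraMap_eq_of_isIntegral {K A B : Type*} [Field K] [IsAlgClosed K]
    [CommRing A] [CommRing B] [Algebra K A] [Algebra K B] [Algebra B A]
    [IsScalarTower K B A] [FaithfulSMul B A] [Algebra.IsIntegral B A] (ψ : B →ₐ[K] K) :
    ∃ φ : A →ₐ[K] K, ∀ b, φ (algebraMap B A b) = ψ b := by
  have hmax : (RingHom.ker ψ).IsMaximal :=
    RingHom.ker_isMaximal_of_surjective ψ fun z => ⟨algebraMap K B z, ψ.commutes z⟩
  obtain ⟨Q, hQ, ⟨hQψ⟩⟩ :=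
    Ideal.exists_maximal_ideal_liesOver_of_isIntegral (S := A) (RingHom.ker ψ)
  have hmk (b : B) : algebraMap K (A ⧸ Q) (ψ b) = Ideal.Quotient.mk Q (algebraMap B A b) := by
    have hker : algebraMap K B (ψ b) - b ∈ RingHom.ker ψ := by
      rw [RingHom.mem_ker, map_sub, AlgHom.commutes, Algebra.algebraMap_self_apply, sub_self]
    rw [hQψ] at hker
    rw [IsScalarTower.algebraMap_apply K A, IsScalarTower.algebraMap_apply K B A,
      Ideal.Quotient.algebraMap_eq, Ideal.Quotient.eq, ← map_sub]
    exact hker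
  have hint : Algebra.IsIntegral K (A ⧸ Q) :=
    isIntegral_of_surjective_of_map_mem_range (B := B) Ideal.Quotient.mk_surjective
      fun b => ⟨ψ b, hmk b⟩
  let e : K ≃ₐ[K] A ⧸ Q := AlgEquiv.ofBijective (Algebra.ofId K (A ⧸ Q))
    IsAlgClosed.algebraMap_bijective_of_isIntegral
  exact ⟨e.symm.toAlgHom.comp (Ideal.Quotient.mkₐ K Q), fun b =>
    (AlgEquiv.symm_apply_eq e).2 (hmk b).symm⟩

section IntegralFamily

variable {R σ : Type*} [CommRing R] [IsDomain R] [Finite σ] {V : σ → MvPolynomial σ R}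
  [Algebra.IsIntegral (Algebra.adjoin R (Set.range V)) (MvPolynomial σ R)]

theorem algebraicIndependent_of_isIntegral_adjoin_range : AlgebraicIndependent R V := by
  refine (Algebra.IsAlgebraic.isTranscendenceBasis_of_lift_le_trdeg_of_finite R V ?_).1
  simp [MvPolynomial.trdeg_of_isDomain]

theorem pos_of_isHomogeneous_of_isIntegral_adjoin_range {i : σ} {d : ℕ}
    (hVi : (V i).IsHomogeneous d) : 0 < d := by
  refine Nat.pos_of_ne_zero ?_
  rintro rfl
  have htr : Transcendental R (V i) :=
    algebraicIndependent_of_isIntegral_adjoin_range.transcendental i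
  rw [totalDegree_eq_zero_iff_eq_C.1 ((totalDegree_zero_iff_isHomogeneous σ).2 hVi)] at htr
  exact htr (isAlgebraic_algebraMap _)

end IntegralFamily

theorem exists_eval_eq_of_isIntegral_adjoin_range {K σ : Type*} [Field K] [IsAlgClosed K]
    [Finite σ] {V : σ → MvPolynomial σ K}
    [Algebra.IsIntegral (Algebra.adjoin K (Set.range V)) (MvPolynomial σ K)] (c : σ → K) :
    ∃ b : σ → K, ∀ i, eval b (V i) = c i := by
  have hV : AlgebraicIndependent K V := algebraicIndependent_of_isIntegral_adjoin_range
  obtain ⟨φ, hφ⟩ := exists_algHom_algebraMap_eq_of_isIntegral (A := MvPolynomial σ K)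
    ((aeval c).comp hV.aevalEquiv.symm.toAlgHom)
  refine ⟨φ ∘ X, fun i => ?_⟩
  have hφ_eval (p : MvPolynomial σ K) : eval (φ ∘ X) p = φ p := by
    rw [← aeval_eq_eval]
    exact (DFunLike.congr_fun (aeval_unique φ) p).symm
  have hVi : algebraMap _ (MvPolynomial σ K) (hV.aevalEquiv (X i)) = V i := by simp
  calc eval (φ ∘ X) (V i) = φ (algebraMap _ _ (hV.aevalEquiv (X i))) := by rw [hφ_eval, hVi]
    _ = aeval c (hV.aevalEquiv.symm (hV.aevalEquiv (X i))) := hφ _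
    _ = c i := by rw [AlgEquiv.symm_apply_apply, aeval_X]

theorem isIntegral_adjoin_of_isIntegral_quotient_span {R σ : Type*} [CommRing R] [Finite σ]
    {s : Set (MvPolynomial σ R)} (hs : ∀ p ∈ s, ∃ d, 0 < d ∧ p.IsHomogeneous d)
    [Algebra.IsIntegral R (MvPolynomial σ R ⧸ Ideal.span s)] :
    Algebra.IsIntegral (Algebra.adjoin R s) (MvPolynomial σ R) := by
  have hquot : Module.Finite R (MvPolynomial σ R ⧸ Ideal.span s) := Algebra.IsIntegral.finite
  let _ : GradedAlgebra (homogeneousSubmodule σ R) := MvPolynomial.gradedAlgebra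
  have hadj := finite_adjoin_of_finite_quotient_span (𝒜 := homogeneousSubmodule σ R) hs
  exact Algebra.IsIntegral.of_finite _ _

section Specialize

variable {R τ σ : Type*} [CommRing R]

/-- Specialization `t := ζ` of the first block of variables `R[t, x] → R[x]`, over an arbitrary
coefficient ring and with arbitrary index types; `specializeT` is the case of `ℂ` and `Fin`. -/
noncomputable def specializeInl (ζ : τ → R) : MvPolynomial (τ ⊕ σ) R →ₐ[R] MvPolynomial σ R :=
  aeval (Sum.elim (fun j => C (ζ j)) X)

theorem eval_specializeInl (ζ : τ → R) (b : σ → R) (p : MvPolynomial (τ ⊕ σ) R) :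
    eval b (specializeInl ζ p) = eval (Sum.elim ζ b) p := by
  have hcomp : (aeval b).comp (specializeInl ζ) = aeval (Sum.elim ζ b) := by
    ext (j | i) <;> simp [specializeInl]
  exact DFunLike.congr_fun hcomp p

theorem isHomogeneous_specializeInl_zero {p : MvPolynomial (τ ⊕ σ) R} {n : ℕ}
    (hp : p.IsHomogeneous n) : (specializeInl (0 : τ → R) p).IsHomogeneous n := by
  have hX (k : τ ⊕ σ) : (Sum.elim (fun _ => C 0) X k : MvPolynomial σ R).IsHomogeneous 1 := by
    rcases k with j | i
    · simpa using isHomogeneous_zero σ R 1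
    · exact isHomogeneous_X R i
  exact one_mul n ▸ hp.aeval _ hX

/-- The family `(t, U)` in `R[t, x]`: the variables of the first block, followed by `U`.
It has one member for each variable of the ring, so transcendence degrees can be counted. -/
noncomputable def withInlVars (U : σ → MvPolynomial (τ ⊕ σ) R) : τ ⊕ σ → MvPolynomial (τ ⊕ σ) R :=
  Sum.elim (fun j => X (Sum.inl j)) U

theorem mk_rename_inr_specializeInl_zero {I : Ideal (MvPolynomial (τ ⊕ σ) R)}
    (hI : ∀ j : τ, X (Sum.inl j) ∈ I) (p : MvPolynomial (τ ⊕ σ) R) :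
    Ideal.Quotient.mkₐ R I (rename Sum.inr (specializeInl 0 p)) = Ideal.Quotient.mkₐ R I p := by
  have hcomp : ((Ideal.Quotient.mkₐ R I).comp (rename Sum.inr)).comp (specializeInl 0) =
      Ideal.Quotient.mkₐ R I := by
    ext (j | i)
    · simpa [specializeInl] using (Ideal.Quotient.eq_zero_iff_mem.2 (hI j)).symm
    · simp [specializeInl]
  exact DFunLike.congr_fun hcomp p

theorem isIntegral_quotient_span_withInlVars (U : σ → MvPolynomial (τ ⊕ σ) R)
    [Algebra.IsIntegral (Algebra.adjoin R (Set.range fun i => specializeInl (0 : τ → R) (U i)))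
      (MvPolynomial σ R)] :
    Algebra.IsIntegral R
      (MvPolynomial (τ ⊕ σ) R ⧸ Ideal.span (Set.range (withInlVars U))) := by
  have hmem (k : τ ⊕ σ) : withInlVars U k ∈ Ideal.span (Set.range (withInlVars U)) :=
    Ideal.subset_span ⟨k, rfl⟩
  have hmk := mk_rename_inr_specializeInl_zero fun j => hmem (Sum.inl j)
  refine isIntegral_of_surjective_of_map_eq_zero
    (s := Set.range fun i => specializeInl (0 : τ → R) (U i))
    (f := (Ideal.Quotient.mkₐ R _).comp (rename (Sum.inr : σ → τ ⊕ σ)))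
    (fun q => ?_) (Set.forall_mem_range.2 fun i => ?_)
  · obtain ⟨p, rfl⟩ := Ideal.Quotient.mkₐ_surjective R _ q
    exact ⟨specializeInl 0 p, hmk p⟩
  · exact (hmk (U i)).trans (Ideal.Quotient.eq_zero_iff_mem.2 (hmem (Sum.inr i)))

end Specialize

theorem stmt11_general {K τ σ : Type*} [Field K] [IsAlgClosed K] [Finite τ] [Finite σ]
    (U : σ → MvPolynomial (τ ⊕ σ) K) (d : σ → ℕ) (hU : ∀ i, (U i).IsHomogeneous (d i))
    (hint : Algebra.IsIntegral
      (Algebra.adjoin K (Set.range fun i => specializeInl (0 : τ → K) (U i)))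
      (MvPolynomial σ K))
    (ζ : τ → K) (c : σ → K) :
    ∃ b : σ → K, ∀ i, eval b (specializeInl ζ (U i)) = c i := by
  have hhom : ∀ p ∈ Set.range (withInlVars U), ∃ n, 0 < n ∧ p.IsHomogeneous n := by
    rintro _ ⟨j | i, rfl⟩
    · exact ⟨1, one_pos, isHomogeneous_X K _⟩
    · have hWi := isHomogeneous_specializeInl_zero (hU i)
      exact ⟨d i, pos_of_isHomogeneous_of_isIntegral_adjoin_range
        (V := fun i => specializeInl (0 : τ → K) (U i)) hWi, hU i⟩
  have hquot := isIntegral_quotient_span_withInlVars U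
  have hadj := isIntegral_adjoin_of_isIntegral_quotient_span hhom
  obtain ⟨b, hb⟩ := exists_eval_eq_of_isIntegral_adjoin_range (V := withInlVars U) (Sum.elim ζ c)
  have hζ : Sum.elim ζ (b ∘ Sum.inr) = b := by
    ext (j | i)
    · simpa [withInlVars] using (hb (Sum.inl j)).symm
    · rfl
  exact ⟨b ∘ Sum.inr, fun i => by rw [eval_specializeInl, hζ]; exact hb (Sum.inr i)⟩

/-- If the `U i` are homogeneous of degree `d i ≥ 1` and `ℂ[x₁,…,x_r]` is
integral over the subalgebra generated by the restrictions `W i = U i (0;·)`,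
then for every `Λ ∈ ℂ^m` and `λ ∈ ℂ^r` there is `b ∈ ℂ^r` with
`U i (Λ; b) = W i (λ)` for all `i`. -/
theorem stmt11 {m r : ℕ} (U : Fin r → MvPolynomial (Fin m ⊕ Fin r) ℂ)
    (d : Fin r → ℕ) (hd : ∀ i, 1 ≤ d i) (hU : ∀ i, (U i).IsHomogeneous (d i))
    (hint : Algebra.IsIntegral
      (Algebra.adjoin ℂ (Set.range fun i => specializeT (0 : Fin m → ℂ) (U i)))
      (MvPolynomial (Fin r) ℂ))
    (Λ : Fin m → ℂ) (lam : Fin r → ℂ) :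
    ∃ b : Fin r → ℂ, ∀ i,
      eval b (specializeT Λ (U i)) = eval lam (specializeT (0 : Fin m → ℂ) (U i)) :=
  stmt11_general U d hU hint Λ fun i => eval lam (specializeT (0 : Fin m → ℂ) (U i))
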